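/- For Lebesgue-almost every β ∈ (0,1), for every c > 0, there are infinitely many odd positive integers q with ‖qβ + 1/2‖ < c/q. -/

import Mathlib

/-!
The set of `β` with `‖qβ + 1/2‖ < c/q` for infinitely many odd `q` is the limsup, over odd `q`, of
the `c/q²`-thickenings of `{x | qx + 1/2 ∈ ℤ}`. By Cassels' scaling lemma
(`blimsup_thickening_mul_ae_eq`) this limsup does not depend on `c`, up to a null set, so it is
enough to treat one fixed constant.

For a fixed constant every irrational `β` works (`exists_odd_odd_approx`, applied to `ξ = 2β`):
an irrational `ξ` has infinitely many approximations `p/q` with `p`, `q` both odd and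
`|qξ - p| ≤ 12/q`. Indeed, let `n/d` be a reduced fraction with `|ξ - n/d| < 1/d²`, and complete
`(n, d)` to a unimodular pair with `(a, b)`, `nb - da = 1`, `0 ≤ b < d`. Modulo 2 the vectors
`(n, d)` and `(a, b)` are a basis of `𝔽₂²`, so one of `(n, d)`, `(n + a, d + b)`, `(2n + a, 2d + b)`
is `(1, 1)` modulo 2. Each of them has denominator between `d` and `3d` and satisfies the
estimate.
-/

open MeasureTheory Real

/-- Distance from a real number to the nearest integer. -/
noncomputable def distNearestInt (t : ℝ) : ℝ := |t - (round t : ℝ)|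

/-- Dirichlet approximations of an irrational number have unbounded denominators, since only
finitely many fractions of bounded denominator lie near a given real number. -/
lemma exists_approx_den_gt {ξ : ℝ} (hξ : Irrational ξ) (B : ℕ) :
    ∃ r : ℚ, B < r.den ∧ |ξ - r| < 1 / (r.den : ℝ) ^ 2 := by
  by_contra! h
  refine Real.infinite_rat_abs_sub_lt_one_div_den_sq_of_irrational hξ ?_
  set K : ℤ := ⌈(|ξ| + 1) * B⌉
  have hfin : ((Set.Icc (-K) K) ×ˢ (Set.Iic B) : Set (ℤ × ℕ)).Finite :=
    (Set.finite_Icc _ _).prod (Set.finite_Iic _)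
  refine Set.Finite.of_finite_image (f := fun r : ℚ => (r.num, r.den)) (hfin.subset ?_) ?_
  · rintro _ ⟨r, hr, rfl⟩
    have hr' : |ξ - r| < 1 / (r.den : ℝ) ^ 2 := hr
    have hB : r.den ≤ B := by
      by_contra hc
      exact absurd hr' (not_lt.mpr (h r (not_le.mp hc)))
    have hd : (1 : ℝ) ≤ r.den := by exact_mod_cast r.den_pos
    have h1 : 1 / (r.den : ℝ) ^ 2 ≤ 1 := by
      rw [div_le_one (by positivity)]
      nlinarith
    have h2 : |(r : ℝ)| ≤ |ξ| + 1 := by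
      have := abs_sub_abs_le_abs_sub (r : ℝ) ξ
      rw [abs_sub_comm] at this
      linarith
    have h3 : (r.num : ℝ) = r * r.den := by exact_mod_cast (Rat.mul_den_eq_num r).symm
    have h4 : |(r.num : ℝ)| ≤ K := by
      rw [h3, abs_mul, Nat.abs_cast]
      calc |(r : ℝ)| * r.den ≤ (|ξ| + 1) * B := by
            gcongr
        _ ≤ K := Int.le_ceil _
    have h5 : |r.num| ≤ K := by exact_mod_cast h4
    exact ⟨abs_le.mp h5, hB⟩
  · intro r _ s _ hrs
    simp only [Prod.mk.injEq] at hrs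
    exact Rat.ext hrs.1 hrs.2

/-- A coprime pair completes to a unimodular one, with a reduced second denominator. -/
lemma exists_unimodular_partner {n : ℤ} {d : ℕ} (hd : 0 < d) (h : n.natAbs.Coprime d) :
    ∃ a b : ℤ, n * b - d * a = 1 ∧ 0 ≤ b ∧ b < d := by
  have hc : IsCoprime n (d : ℤ) := by
    rw [Int.isCoprime_iff_gcd_eq_one]
    simpa [Int.gcd] using h
  obtain ⟨u, v, huv⟩ := hc
  have hd' : (0 : ℤ) < d := by exact_mod_cast hd
  refine ⟨-v - n * (u / d), u % d, ?_, Int.emod_nonneg _ hd'.ne', Int.emod_lt_of_pos _ hd'⟩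
  rw [Int.emod_def]
  linear_combination huv

/-- An irrational number has infinitely many approximations by fractions `p / q`, with `p` and `q`
odd, of quality comparable to that of Dirichlet's theorem. -/
lemma exists_odd_odd_approx {ξ : ℝ} (hξ : Irrational ξ) (B : ℕ) :
    ∃ (p : ℤ) (q : ℕ), B < q ∧ Odd p ∧ Odd q ∧ (q : ℝ) * |q * ξ - p| ≤ 12 := by
  obtain ⟨r, hB, hr⟩ := exists_approx_den_gt hξ B
  obtain ⟨a, b, hab, hb0, hbd⟩ := exists_unimodular_partner r.den_pos r.reduced
  set d := r.den
  set n := r.num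
  have hd : (0 : ℝ) < d := by exact_mod_cast r.den_pos
  -- The error `e = dξ - n` satisfies `d|e| < 1`.
  have he : (d : ℝ) * |d * ξ - n| < 1 := by
    have h3 : (n : ℝ) = r * d := by exact_mod_cast (Rat.mul_den_eq_num r).symm
    have : (d : ℝ) * ξ - n = d * (ξ - r) := by rw [h3]; ring
    rw [this, abs_mul, abs_of_pos hd]
    rw [lt_div_iff₀ (by positivity)] at hr
    linarith
  by_cases hnd : Odd n ∧ Odd (d : ℤ)
  · exact ⟨n, d, hB, hnd.1, by exact_mod_cast hnd.2, by linarith⟩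
  have key : ∃ k : ℤ, 1 ≤ k ∧ k ≤ 2 ∧ Odd (k * n + a) ∧ Odd (k * d + b) := by
    have hodd : Odd (n * b - d * a) := by rw [hab]; exact odd_one
    by_cases hab' : Odd a ∧ Odd b
    · exact ⟨2, by norm_num, le_rfl, (even_two_mul n).add_odd hab'.1,
        (even_two_mul (d : ℤ)).add_odd hab'.2⟩
    · refine ⟨1, le_rfl, by norm_num, ?_, ?_⟩ <;>
        simp only [one_mul, Int.odd_add, Int.odd_sub, Int.odd_mul, ← Int.not_odd_iff_even]
          at hodd ⊢ <;> tauto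
  obtain ⟨k, hk1, hk2, hp, hq⟩ := key
  have hd' : (0 : ℤ) < d := by exact_mod_cast r.den_pos
  have hle : (d : ℤ) ≤ k * d + b := by nlinarith
  have hle3 : k * d + b ≤ 3 * d := by nlinarith
  obtain ⟨q, hqe⟩ := Int.eq_ofNat_of_zero_le (hd'.le.trans hle)
  rw [hqe] at hle hle3 hq
  refine ⟨k * n + a, q, by lia, hp, by exact_mod_cast hq, ?_⟩
  have hq3 : (q : ℝ) ≤ 3 * d := by exact_mod_cast hle3
  have hqR : (k : ℝ) * d + b = q := by exact_mod_cast hqe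
  have habR : (n : ℝ) * b - d * a = 1 := by exact_mod_cast hab
  -- Unimodularity turns the error of the new fraction into `d(qξ - p) = qe + 1`.
  have hid : (d : ℝ) * (q * ξ - ((k * n + a : ℤ) : ℝ)) = q * (d * ξ - n) + 1 := by
    push_cast
    rw [← hqR]
    linear_combination habR
  have h4 : (d : ℝ) * |q * ξ - ((k * n + a : ℤ) : ℝ)| ≤ 4 := by
    have habs := abs_mul (d : ℝ) (q * ξ - ((k * n + a : ℤ) : ℝ))
    rw [abs_of_pos hd] at habs
    rw [← habs, hid]
    calc |(q : ℝ) * (d * ξ - n) + 1| ≤ |(q : ℝ) * (d * ξ - n)| + |1| := abs_add_le _ _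
      _ = q * |d * ξ - n| + 1 := by rw [abs_mul, Nat.abs_cast, abs_one]
      _ ≤ 3 * d * |d * ξ - n| + 1 := by gcongr
      _ ≤ 4 := by linarith
  calc (q : ℝ) * |q * ξ - ((k * n + a : ℤ) : ℝ)|
      ≤ 3 * d * |q * ξ - ((k * n + a : ℤ) : ℝ)| := by gcongr
    _ ≤ 12 := by linarith

/-- The points `x` solving the inhomogeneous problem exactly at `q`, i.e. with `qx + 1/2 ∈ ℤ`. -/
def halfIntegerPoints (q : ℕ) : Set ℝ := {x | ∃ m : ℤ, (q : ℝ) * x + 1 / 2 = m}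

/-- With the constant `12`, every irrational number solves the approximation problem. -/
lemma mem_blimsup_of_irrational {β : ℝ} (hβ : Irrational β) :
    β ∈ Filter.blimsup (fun q : ℕ => Metric.thickening (12 * (1 / (q : ℝ) ^ 2))
      (halfIntegerPoints q)) Filter.atTop (fun q => Odd q) := by
  rw [← Nat.cofinite_eq_atTop, Filter.cofinite.blimsup_set_eq, Set.mem_ofPred_eq,
    Set.infinite_iff_exists_gt]
  intro B
  have h2 : Irrational (2 * β) := by
    simpa using hβ.ratCast_mul (q := 2) two_ne_zero
  obtain ⟨p, q, hB, ⟨m, hm⟩, hqo, hq⟩ := exists_odd_odd_approx h2 B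
  have hq0 : (0 : ℝ) < q := by exact_mod_cast (Nat.zero_le B).trans_lt hB
  have hmem : β ∈ Metric.thickening (12 * (1 / (q : ℝ) ^ 2)) (halfIntegerPoints q) := by
    rw [Metric.mem_thickening_iff]
    refine ⟨(p : ℝ) / (2 * q), ⟨m + 1, ?_⟩, ?_⟩
    · rw [hm]
      push_cast
      field_simp
      ring
    · rw [Real.dist_eq]
      have : β - p / (2 * q) = (q * (2 * β) - p) / (2 * q) := by
        field_simp
      rw [this, abs_div, abs_of_pos (by positivity : (0 : ℝ) < 2 * q), mul_one_div,
        div_lt_div_iff₀ (by positivity) (by positivity)]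
      nlinarith
  exact ⟨q, ⟨hqo, hmem⟩, hB⟩

lemma distNearestInt_lt_of_mem_thickening {β c : ℝ} {q : ℕ} (hq : 0 < q)
    (h : β ∈ Metric.thickening (c * (1 / (q : ℝ) ^ 2)) (halfIntegerPoints q)) :
    distNearestInt ((q : ℝ) * β + 1 / 2) < c / q := by
  obtain ⟨x, ⟨m, hm⟩, hx⟩ := Metric.mem_thickening_iff.mp h
  have hq0 : (0 : ℝ) < q := by exact_mod_cast hq
  rw [Real.dist_eq] at hx
  calc distNearestInt ((q : ℝ) * β + 1 / 2) ≤ |(q : ℝ) * β + 1 / 2 - m| := round_le _ _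
    _ = q * |β - x| := by
      have hfac : (q : ℝ) * β + 1 / 2 - m = q * (β - x) := by rw [← hm]; ring
      rw [hfac, abs_mul, abs_of_pos hq0]
    _ < q * (c * (1 / (q : ℝ) ^ 2)) := by gcongr
    _ = c / q := by field_simp

lemma ae_infinite_of_pos {c : ℝ} (hc : 0 < c) :
    ∀ᵐ β : ℝ, {q : ℕ | 0 < q ∧ Odd q ∧
      distNearestInt ((q : ℝ) * β + 1 / 2) < c / (q : ℝ)}.Infinite := by
  have hr : Filter.Tendsto (fun q : ℕ => 1 / (q : ℝ) ^ 2) Filter.atTop (nhds 0) :=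
    tendsto_const_div_pow 1 2 two_ne_zero
  have e1 := blimsup_thickening_mul_ae_eq volume (fun q => Odd q) halfIntegerPoints
    (by norm_num : (0 : ℝ) < 12) _ hr
  have e2 := blimsup_thickening_mul_ae_eq volume (fun q => Odd q) halfIntegerPoints hc _ hr
  have hirr : ∀ᵐ β : ℝ, Irrational β := (Set.countable_range ((↑) : ℚ → ℝ)).ae_notMem volume
  filter_upwards [hirr, (e1.trans e2.symm).mem_iff] with β hβ hiff
  have hmem := hiff.mp (mem_blimsup_of_irrational hβ)
  rw [← Nat.cofinite_eq_atTop, Filter.cofinite.blimsup_set_eq, Set.mem_ofPred_eq] at hmem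
  refine hmem.mono ?_
  rintro q ⟨hodd, hq⟩
  exact ⟨hodd.pos, hodd, distNearestInt_lt_of_mem_thickening hodd.pos hq⟩

/-- For Lebesgue-almost every β ∈ (0,1), for every c > 0, there are
infinitely many odd positive integers q with ‖qβ + 1/2‖ < c/q. -/
theorem stmt13 :
    ∀ᵐ β ∂(volume.restrict (Set.Ioo (0 : ℝ) 1)),
      ∀ c > (0 : ℝ),
        {q : ℕ | 0 < q ∧ Odd q ∧
          distNearestInt ((q : ℝ) * β + 1 / 2) < c / (q : ℝ)}.Infinite := by
  apply ae_restrict_of_ae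
  -- The condition is monotone in `c`, so countably many values of `c` suffice.
  have h : ∀ᵐ β : ℝ, ∀ k : ℕ, {q : ℕ | 0 < q ∧ Odd q ∧
      distNearestInt ((q : ℝ) * β + 1 / 2) < (1 / ((k : ℝ) + 1)) / (q : ℝ)}.Infinite :=
    ae_all_iff.mpr fun k => ae_infinite_of_pos (by positivity)
  filter_upwards [h] with β hβ c hc
  obtain ⟨k, hk⟩ := exists_nat_one_div_lt hc
  refine (hβ k).mono ?_
  rintro q ⟨hq, hodd, hlt⟩
  exact ⟨hq, hodd, hlt.trans_le (by gcongr)⟩
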